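/- arXiv:1909.10445 — 12 statements merged into one kernel-verified Lean document; each statement's English description precedes it below -/
import Mathlib

section
/- Let n be a square-free positive integer and let α = (a + √n·i)/c be an element of Q*(√-n), with b = (a²+n)/c. Then all of the following complex numbers are well defined (the denominators 2b, 2(2a+b+c), 4a+4b+c are nonzero) and: x(α) = (-a + √n·i)/(2b); y(α) = (-(a+c) + √n·i)/(2(2a+b+c)); y²(α) = ((-3a-2b-c) + √n·i)/(4a+4b+c); y³(α) = ((-a-2b) + √n·i)/(2b), where x(z) = -1/(2z) and y(z) = -1/(2(z+1)). -/
open Complex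

/-- The set `Q*(√-n)` of complex numbers `(a + √n·i)/c` with `a, c ∈ ℤ`,
`c` even and nonzero, and `c ∣ a² + n`. -/
def Qstar (n : ℕ) : Set ℂ :=
  {z | ∃ a c : ℤ, c ≠ 0 ∧ 2 ∣ c ∧ c ∣ (a ^ 2 + (n : ℤ)) ∧
    z = ((a : ℂ) + Real.sqrt n * Complex.I) / (c : ℂ)}

/-- The Hecke transformation `x(z) = -1/(2z)`. -/
noncomputable def heckeX (z : ℂ) : ℂ := -1 / (2 * z)

/-- The Hecke transformation `y(z) = -1/(2(z+1))`. -/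
noncomputable def heckeY (z : ℂ) : ℂ := -1 / (2 * (z + 1))

/-- One step of the Hecke group action. -/
noncomputable def heckeStep (z w : ℂ) : Prop := w = heckeX z ∨ w = heckeY z

/-- Two elements lie in the same orbit if they are related by the equivalence
relation on `Q*(√-n)` generated by `z ~ x(z)` and `z ~ y(z)`. -/
def sameOrbit (n : ℕ) (z w : ℂ) : Prop :=
  Relation.EqvGen (fun u v => u ∈ Qstar n ∧ v ∈ Qstar n ∧ heckeStep u v) z w

/-- The quadruplet `Q_α = {α, y(α), y²(α), y³(α)}`. -/
noncomputable def quad (α : ℂ) : Set ℂ :=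
  {α, heckeY α, heckeY (heckeY α), heckeY (heckeY (heckeY α))}

/-- The orbit relation on the subtype `Q*(√-n)`. -/
def orbitRel (n : ℕ) (u v : {z : ℂ // z ∈ Qstar n}) : Prop :=
  sameOrbit n u.1 v.1

/-- `E_i(n)`: the number of positive even integers `C` dividing `i² + n`
with `2(i²+n)/C + C ≤ 3i`. -/
def Efun (i n : ℕ) : ℕ :=
  ((i ^ 2 + n).divisors.filter (fun C => 2 ∣ C ∧ 2 * (i ^ 2 + n) / C + C ≤ 3 * i)).card

/-- The basic computation behind all four formulas. -/
lemma hecke_aux (A C D s N : ℂ) (hs : s ^ 2 = -N) (hC : C ≠ 0) (hD : D ≠ 0)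
    (h : C * D = 2 * (A ^ 2 + N)) : -1 / (2 * ((A + s) / C)) = (-A + s) / D := by
  have hA : A + s ≠ 0 := by
    intro h0
    apply mul_ne_zero hC hD
    linear_combination h + 2 * (A - s) * h0 + 2 * hs
  field_simp
  linear_combination -h - 2 * hs

lemma heckeY_aux (A C D s N : ℂ) (hs : s ^ 2 = -N) (hC : C ≠ 0) (hD : D ≠ 0)
    (h : C * D = 2 * ((A + C) ^ 2 + N)) : heckeY ((A + s) / C) = (-(A + C) + s) / D := by
  have e : (A + s) / C + 1 = ((A + C) + s) / C := by
    field_simp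
    ring
  rw [heckeY, e]
  exact hecke_aux _ _ _ _ _ hs hC hD h

theorem stmt1 (n : ℕ) (hn : 0 < n) (hsf : Squarefree n)
    (a b c : ℤ) (hc : c ≠ 0) (hc2 : (2 : ℤ) ∣ c)
    (hb : b * c = a ^ 2 + (n : ℤ))
    (α : ℂ) (hα : α = ((a : ℂ) + Real.sqrt n * Complex.I) / (c : ℂ)) :
    b ≠ 0 ∧ 2 * a + b + c ≠ 0 ∧ 4 * a + 4 * b + c ≠ 0 ∧
    heckeX α = ((-a : ℤ) + Real.sqrt n * Complex.I) / ((2 * b : ℤ) : ℂ) ∧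
    heckeY α = ((-(a + c) : ℤ) + Real.sqrt n * Complex.I) / ((2 * (2 * a + b + c) : ℤ) : ℂ) ∧
    heckeY (heckeY α) =
      ((-3 * a - 2 * b - c : ℤ) + Real.sqrt n * Complex.I) / ((4 * a + 4 * b + c : ℤ) : ℂ) ∧
    heckeY (heckeY (heckeY α)) =
      ((-a - 2 * b : ℤ) + Real.sqrt n * Complex.I) / ((2 * b : ℤ) : ℂ) := by
  have hn' : (0 : ℤ) < n := by exact_mod_cast hn
  have h1 : b ≠ 0 := by
    rintro rfl
    nlinarith [sq_nonneg a]
  have h2 : 2 * a + b + c ≠ 0 := by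
    intro h
    have : (a + c) ^ 2 + (n : ℤ) = 0 := by linear_combination c * h - hb
    nlinarith [sq_nonneg (a + c)]
  have h3 : 4 * a + 4 * b + c ≠ 0 := by
    intro h
    have : (a + 2 * b) ^ 2 + (n : ℤ) = 0 := by linear_combination b * h - hb
    nlinarith [sq_nonneg (a + 2 * b)]
  have hs : ((Real.sqrt n : ℂ) * Complex.I) ^ 2 = -(n : ℂ) := by
    rw [mul_pow, Complex.I_sq, ← Complex.ofReal_pow, Real.sq_sqrt (Nat.cast_nonneg n)]
    simp
  have hbC : (b : ℂ) * c = (a : ℂ) ^ 2 + n := by exact_mod_cast hb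
  have hc' : (c : ℂ) ≠ 0 := by exact_mod_cast hc
  have h1' : ((2 * b : ℤ) : ℂ) ≠ 0 := by exact_mod_cast mul_ne_zero two_ne_zero h1
  have h2' : ((2 * (2 * a + b + c) : ℤ) : ℂ) ≠ 0 := by
    exact_mod_cast mul_ne_zero two_ne_zero h2
  have h3' : ((4 * a + 4 * b + c : ℤ) : ℂ) ≠ 0 := by exact_mod_cast h3
  have e1 : heckeY α = ((-(a + c) : ℤ) + Real.sqrt n * Complex.I) /
      ((2 * (2 * a + b + c) : ℤ) : ℂ) := by
    rw [hα, heckeY_aux _ _ _ _ _ hs hc' h2']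
    · push_cast; ring
    · push_cast; linear_combination 2 * hbC
  have e2 : heckeY (heckeY α) = ((-3 * a - 2 * b - c : ℤ) + Real.sqrt n * Complex.I) /
      ((4 * a + 4 * b + c : ℤ) : ℂ) := by
    rw [e1, heckeY_aux _ _ _ _ _ hs h2' h3']
    · congr 2; push_cast; ring
    · push_cast; linear_combination 2 * hbC
  have e3 : heckeY (heckeY (heckeY α)) = ((-a - 2 * b : ℤ) + Real.sqrt n * Complex.I) /
      ((2 * b : ℤ) : ℂ) := by
    rw [e2, heckeY_aux _ _ _ _ _ hs h3' h1']
    · congr 2; push_cast; ring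
    · push_cast; linear_combination 2 * hbC
  refine ⟨h1, h2, h3, ?_, e1, e2, e3⟩
  rw [hα, heckeX, hecke_aux _ _ _ _ _ hs hc' h1']
  · push_cast; rfl
  · push_cast; linear_combination 2 * hbC
end

section
/- Let n be a square-free positive integer. Then Q*(√-n) is stable under the Hecke group action: for every z ∈ Q*(√-n), both -1/(2z) and -1/(2(z+1)) again belong to Q*(√-n) (in particular z ≠ 0 and z ≠ -1, since every element of Q*(√-n) has nonzero imaginary part). -/
open Complex

theorem Qstar_x (n : ℕ) (hn : 0 < n) (z : ℂ) (hz : z ∈ Qstar n) :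
    z ≠ 0 ∧ heckeX z ∈ Qstar n := by
  obtain ⟨a, c, hc, ⟨k, hk⟩, ⟨b, hb⟩, rfl⟩ := hz
  have hs : Real.sqrt n ≠ 0 := by positivity
  have hcC : (c : ℂ) ≠ 0 := by exact_mod_cast hc
  have hnum : (a : ℂ) + Real.sqrt n * Complex.I ≠ 0 := by
    intro h
    have := congrArg Complex.im h
    simp at this
    omega
  have hb0 : b ≠ 0 := by
    rintro rfl
    have : (0 : ℤ) < n := by exact_mod_cast hn
    nlinarith [sq_nonneg a]
  have hbC : (b : ℂ) ≠ 0 := by exact_mod_cast hb0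
  refine ⟨div_ne_zero hnum hcC, -a, 2 * b, by simpa using hb0, ⟨b, rfl⟩, ⟨k, ?_⟩, ?_⟩
  · rw [neg_sq, hb, hk]; ring
  · have hsq : ((Real.sqrt n : ℝ) : ℂ) ^ 2 = n := by
      rw [← Complex.ofReal_pow, Real.sq_sqrt (Nat.cast_nonneg n)]; simp
    have hbc : (a : ℂ) ^ 2 + n = c * b := by exact_mod_cast hb
    unfold heckeX
    push_cast
    rw [← mul_div_assoc, div_div_eq_mul_div, div_eq_div_iff (mul_ne_zero two_ne_zero hnum)
      (mul_ne_zero two_ne_zero hbC)]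
    linear_combination 2 * hbc + 2 * hsq - 2 * ((Real.sqrt n : ℝ) : ℂ) ^ 2 * Complex.I_sq

theorem Qstar_add_one (n : ℕ) (z : ℂ) (hz : z ∈ Qstar n) : z + 1 ∈ Qstar n := by
  obtain ⟨a, c, hc, h2, ⟨b, hb⟩, rfl⟩ := hz
  have hcC : (c : ℂ) ≠ 0 := by exact_mod_cast hc
  refine ⟨a + c, c, hc, h2, ⟨b + 2 * a + c, by linear_combination hb⟩, ?_⟩
  push_cast
  field_simp
  ring

theorem stmt2 (n : ℕ) (hn : 0 < n) (hsf : Squarefree n) :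
    ∀ z ∈ Qstar n, z ≠ 0 ∧ z ≠ -1 ∧ heckeX z ∈ Qstar n ∧ heckeY z ∈ Qstar n := by
  intro z hz
  obtain ⟨h0, hx⟩ := Qstar_x n hn z hz
  obtain ⟨h1, hy⟩ := Qstar_x n hn (z + 1) (Qstar_add_one n z hz)
  exact ⟨h0, fun h => h1 (by rw [h]; ring), hx, hy⟩
end

section
/- Let n be a square-free positive integer. Then Q*(√-n) contains a purely imaginary element (an element with real part 0) if and only if n is even; moreover, when n is even, the set of purely imaginary elements of Q*(√-n) is finite with exactly 2·d(n/2) elements, where d(m) denotes the number of positive divisors of m. -/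
open Complex

theorem mem_pure_iff (n : ℕ) (z : ℂ) :
    (z ∈ Qstar n ∧ z.re = 0) ↔ ∃ c : ℤ, c ≠ 0 ∧ 2 ∣ c ∧ c ∣ (n : ℤ) ∧
      z = (Real.sqrt n * Complex.I) / (c : ℂ) := by
  constructor
  · rintro ⟨⟨a, c, hc, h2, hd, rfl⟩, hre⟩
    have hc' : (c : ℝ) ≠ 0 := by exact_mod_cast hc
    have key : (((a : ℂ) + Real.sqrt n * Complex.I) / (c : ℂ)).re = (a : ℝ) / (c : ℝ) := by
      have : (c : ℂ) = ((c : ℝ) : ℂ) := by push_cast; rfl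
      rw [this, Complex.div_ofReal_re]
      simp
    rw [key, div_eq_zero_iff] at hre
    have ha : a = 0 := by
      rcases hre with h | h
      · exact_mod_cast h
      · exact absurd h hc'
    subst ha
    refine ⟨c, hc, h2, by simpa using hd, by simp⟩
  · rintro ⟨c, hc, h2, hd, rfl⟩
    refine ⟨⟨0, c, hc, h2, by simpa using hd, by simp⟩, ?_⟩
    have : (c : ℂ) = ((c : ℝ) : ℂ) := by push_cast; rfl
    rw [this, Complex.div_ofReal_re]
    simp

theorem stmt4 (n : ℕ) (hn : 0 < n) (hsf : Squarefree n) :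
    ((∃ z ∈ Qstar n, z.re = 0) ↔ Even n) ∧
    (Even n → ({z | z ∈ Qstar n ∧ z.re = 0}).Finite ∧
      ({z | z ∈ Qstar n ∧ z.re = 0}).ncard = 2 * (n / 2).divisors.card) := by
  refine ⟨⟨?_, ?_⟩, ?_⟩
  · rintro ⟨z, hz⟩
    obtain ⟨c, hc, h2, hd, -⟩ := (mem_pure_iff n z).1 hz
    have h := h2.trans hd
    exact even_iff_two_dvd.2 (by exact_mod_cast h)
  · intro he
    have h2 : (2 : ℤ) ∣ (n : ℤ) := by exact_mod_cast even_iff_two_dvd.1 he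
    exact ⟨_, (mem_pure_iff n _).2 ⟨2, by norm_num, dvd_rfl, h2, rfl⟩⟩
  · intro he
    obtain ⟨m, rfl⟩ := even_iff_two_dvd.1 he
    have hm : m ≠ 0 := by omega
    rw [Nat.mul_div_cancel_left m (by norm_num : 0 < 2)]
    let g : ℕ × ℤ → ℂ := fun p =>
      (Real.sqrt ((2 * m : ℕ) : ℝ) * Complex.I) / ((2 * (p.2 * (p.1 : ℤ)) : ℤ) : ℂ)
    let T : Finset (ℕ × ℤ) := m.divisors ×ˢ ({1, -1} : Finset ℤ)
    have hset : {z | z ∈ Qstar (2 * m) ∧ z.re = 0} = Set.image g (T : Set (ℕ × ℤ)) := by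
      ext z
      rw [Set.mem_setOf_eq, mem_pure_iff]
      constructor
      · rintro ⟨c, hc, ⟨k, rfl⟩, hd, rfl⟩
        have hk : k ∣ (m : ℤ) := by
          push_cast at hd
          exact (mul_dvd_mul_iff_left (by norm_num : (2 : ℤ) ≠ 0)).1 hd
        have hk0 : k ≠ 0 := by rintro rfl; simp at hc
        refine ⟨(k.natAbs, k.sign), ?_, ?_⟩
        · simp only [T, Finset.coe_product, Set.mem_prod, Finset.mem_coe, Nat.mem_divisors]
          refine ⟨⟨Int.natAbs_dvd_natAbs.2 hk, hm⟩, ?_⟩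
          rcases lt_or_gt_of_ne hk0 with h | h
          · simp [Int.sign_eq_neg_one_of_neg h]
          · simp [Int.sign_eq_one_of_pos h]
        · simp only [g]
          rw [Int.sign_mul_natAbs]
      · rintro ⟨⟨d, e⟩, hT, rfl⟩
        simp only [T, Finset.coe_product, Set.mem_prod, Finset.mem_coe, Nat.mem_divisors,
          Finset.mem_insert, Finset.mem_singleton] at hT
        obtain ⟨⟨hd, -⟩, he⟩ := hT
        have hd0 : d ≠ 0 := by rintro rfl; simp at hd; exact hm hd
        have hd' : (d : ℤ) ∣ (m : ℤ) := by exact_mod_cast hd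
        refine ⟨2 * (e * (d : ℤ)), ?_, Dvd.intro _ rfl, ?_, rfl⟩
        · rcases he with rfl | rfl <;> omega
        · push_cast
          apply mul_dvd_mul_left
          rcases he with rfl | rfl
          · simpa using hd'
          · simpa using hd'
    have hinj : Set.InjOn g (T : Set (ℕ × ℤ)) := by
      rintro ⟨d, e⟩ h1 ⟨d', e'⟩ h2 h
      simp only [T, Finset.coe_product, Set.mem_prod, Finset.mem_coe, Nat.mem_divisors,
          Finset.mem_insert, Finset.mem_singleton] at h1 h2
      have hs : ((Real.sqrt ((2 * m : ℕ) : ℝ) : ℝ) : ℂ) * Complex.I ≠ 0 := by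
        apply mul_ne_zero _ Complex.I_ne_zero
        have : 0 < Real.sqrt ((2 * m : ℕ) : ℝ) := Real.sqrt_pos.2 (by exact_mod_cast hn)
        exact_mod_cast this.ne'
      simp only [g, div_eq_mul_inv] at h
      have h3 := inv_injective (mul_left_cancel₀ hs h)
      have h4 : 2 * (e * (d : ℤ)) = 2 * (e' * (d' : ℤ)) := by exact_mod_cast h3
      have hd0 : d ≠ 0 := by rintro rfl; simp at h1
      have hd0' : d' ≠ 0 := by rintro rfl; simp at h2
      obtain ⟨-, he⟩ := h1
      obtain ⟨-, he'⟩ := h2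
      rw [Prod.mk.injEq]
      rcases he with rfl | rfl <;> rcases he' with rfl | rfl <;> omega
    rw [hset]
    refine ⟨T.finite_toSet.image g, ?_⟩
    rw [Set.ncard_image_of_injOn hinj, Set.ncard_coe_finset]
    simp only [T]
    rw [Finset.card_product, mul_comm]
    rfl
end

section
/- Let n be a square-free positive integer and α ∈ Q*(√-n). If α is totally positive or purely imaginary (i.e. Re(α) ≥ 0), then y(α), y²(α), and y³(α) are all totally negative, where y(z) = -1/(2(z+1)). -/
open Complex

theorem inv_re_pos_aux (z : ℂ) (h : 0 < z.re) : 0 < (z⁻¹).re := by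
  have hz : z ≠ 0 := by
    rintro rfl
    simp at h
  rw [Complex.inv_re]
  exact div_pos h (Complex.normSq_pos.mpr hz)

theorem Qstar_ne_zero_aux (n : ℕ) (hn : 0 < n) (α : ℂ) (hα : α ∈ Qstar n) : α ≠ 0 := by
  obtain ⟨a, c, hc, -, -, rfl⟩ := hα
  have hc' : (c : ℂ) ≠ 0 := by exact_mod_cast hc
  refine div_ne_zero ?_ hc'
  intro h0
  have him := congrArg Complex.im h0
  have hpos : 0 < Real.sqrt n := Real.sqrt_pos.mpr (by exact_mod_cast hn)
  simp at him
  omega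

theorem stmt6 (n : ℕ) (hn : 0 < n) (hsf : Squarefree n)
    (α : ℂ) (hα : α ∈ Qstar n) (h : 0 ≤ α.re) :
    (heckeY α).re < 0 ∧ (heckeY (heckeY α)).re < 0 ∧
      (heckeY (heckeY (heckeY α))).re < 0 := by
  have h0 : α ≠ 0 := Qstar_ne_zero_aux n hn α hα
  have h1 : α + 1 ≠ 0 := by
    intro e
    have := congrArg Complex.re e
    simp at this
    linarith
  have h2 : 2 * α + 1 ≠ 0 := by
    intro e
    have := congrArg Complex.re e
    simp at this
    linarith
  have e1 : heckeY α = -(2 * (α + 1))⁻¹ := by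
    unfold heckeY
    rw [neg_div, one_div]
  have e2 : heckeY (heckeY α) = -(1 / 2 : ℝ) - (2 * (2 * α + 1))⁻¹ := by
    have e : heckeY α + 1 = (2 * α + 1) / (2 * (α + 1)) := by
      unfold heckeY
      field_simp
      ring
    rw [heckeY, e]
    push_cast
    field_simp
    ring
  have e3 : heckeY (heckeY (heckeY α)) = -1 - (2 * α)⁻¹ := by
    have e : heckeY (heckeY α) + 1 = α / (2 * α + 1) := by
      rw [e2]
      push_cast
      field_simp
      ring
    rw [heckeY, e]
    field_simp
    ring
  refine ⟨?_, ?_, ?_⟩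
  · have := inv_re_pos_aux (2 * (α + 1)) (by simp; linarith)
    rw [e1, Complex.neg_re]
    linarith
  · have := inv_re_pos_aux (2 * (2 * α + 1)) (by simp; linarith)
    rw [e2, Complex.sub_re, Complex.neg_re, Complex.ofReal_re]
    linarith
  · have : 0 ≤ ((2 * α)⁻¹).re := by
      rw [Complex.inv_re]
      exact div_nonneg (by simpa using h) (Complex.normSq_nonneg _)
    rw [e3, Complex.sub_re, Complex.neg_re, Complex.one_re]
    linarith
end

section
/- Let n be a square-free positive integer and let α = (a + √n·i)/c ∈ Q*(√-n), with b = (a²+n)/c. Then α, y(α), y²(α), and y³(α) are all totally negative if and only if α is totally negative and the inequalities |a| < |c|, |a| < 2|b|, and 3|a| < 2|b| + |c| hold, where y(z) = -1/(2(z+1)). -/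
open Complex

theorem div_pos_iff_of_neg_right_aux {x y : ℝ} (hy : y < 0) : 0 < x / y ↔ x < 0 := by
  rw [← neg_div_neg_eq, div_pos_iff_of_pos_right (neg_pos.2 hy), neg_pos]

theorem div_neg_iff_of_pos_right_aux {x y : ℝ} (hy : 0 < y) : x / y < 0 ↔ x < 0 := by
  rw [← neg_pos, ← neg_div, div_pos_iff_of_pos_right hy, neg_pos]

theorem div_neg_iff_of_neg_right_aux {x y : ℝ} (hy : y < 0) : x / y < 0 ↔ 0 < x := by
  rw [← neg_div_neg_eq, div_neg_iff_of_pos_right_aux (neg_pos.2 hy), neg_lt_zero]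

theorem re_div_pos_iff_aux (p q : ℂ) (hq : q ≠ 0) :
    0 < (p / q).re ↔ 0 < p.re * q.re + p.im * q.im := by
  have h := Complex.normSq_pos.2 hq
  rw [Complex.div_re, ← add_div, div_pos_iff_of_pos_right h]

theorem heckeY_re_neg_aux (z : ℂ) (hz : z.im ≠ 0) :
    (heckeY z).re < 0 ↔ 0 < z.re + 1 := by
  have hq : 2 * (z + 1) ≠ 0 := by
    intro h
    apply hz
    have := congrArg Complex.im h
    simpa using this
  have h := re_div_pos_iff_aux 1 (2 * (z + 1)) hq
  have e : (heckeY z).re = -(1 / (2 * (z + 1))).re := by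
    rw [heckeY, neg_div, Complex.neg_re]
  rw [e, neg_lt_zero, h]
  simp

theorem heckeY_im_aux (z : ℂ) (hz : z.im ≠ 0) : (heckeY z).im ≠ 0 := by
  intro h0
  have hq : z + 1 ≠ 0 := by
    intro h
    apply hz
    have := congrArg Complex.im h
    simpa using this
  have e : z = -1 - 1 / (2 * heckeY z) := by
    unfold heckeY
    field_simp
    ring
  apply hz
  rw [e]
  simp [h0]

theorem quad_neg_aux (z : ℂ) (hz : z.im ≠ 0) :
    ((heckeY z).re < 0 ∧ (heckeY (heckeY z)).re < 0 ∧
        (heckeY (heckeY (heckeY z))).re < 0) ↔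
      (0 < z.re + 1 ∧ 0 < 2 * (z.re ^ 2 + z.im ^ 2) + 3 * z.re + 1 ∧
        0 < 2 * (z.re ^ 2 + z.im ^ 2) + z.re) := by
  have h1 := heckeY_im_aux z hz
  have h2 := heckeY_im_aux _ h1
  rw [heckeY_re_neg_aux _ hz, heckeY_re_neg_aux _ h1, heckeY_re_neg_aux _ h2]
  have hq : z + 1 ≠ 0 := by
    intro h
    apply hz
    have := congrArg Complex.im h
    simpa using this
  have hr : 2 * z + 1 ≠ 0 := by
    intro h
    apply hz
    have := congrArg Complex.im h
    simpa using this
  have e1 : heckeY z + 1 = (2 * z + 1) / (2 * (z + 1)) := by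
    unfold heckeY
    field_simp
    ring
  have e2 : heckeY (heckeY z) + 1 = z / (2 * z + 1) := by
    have : heckeY (heckeY z) = -1 / (2 * (heckeY z + 1)) := rfl
    rw [this, e1]
    field_simp
    ring
  have f1 : (heckeY z).re + 1 = ((2 * z + 1) / (2 * (z + 1))).re := by
    rw [← e1]; simp
  have f2 : (heckeY (heckeY z)).re + 1 = (z / (2 * z + 1)).re := by
    rw [← e2]; simp
  rw [f1, f2, re_div_pos_iff_aux _ _ hr, re_div_pos_iff_aux _ _ (mul_ne_zero two_ne_zero hq)]
  simp only [Complex.add_re, Complex.add_im, Complex.mul_re, Complex.mul_im, Complex.re_ofNat,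
    Complex.im_ofNat, Complex.one_re, Complex.one_im]
  constructor <;> rintro ⟨h, h', h''⟩ <;> refine ⟨h, ?_, ?_⟩ <;> nlinarith

theorem stmt7 (n : ℕ) (hn : 0 < n) (hsf : Squarefree n)
    (a b c : ℤ) (hc : c ≠ 0) (hc2 : (2 : ℤ) ∣ c)
    (hb : b * c = a ^ 2 + (n : ℤ))
    (α : ℂ) (hα : α = ((a : ℂ) + Real.sqrt n * Complex.I) / (c : ℂ)) :
    (α.re < 0 ∧ (heckeY α).re < 0 ∧ (heckeY (heckeY α)).re < 0 ∧
        (heckeY (heckeY (heckeY α))).re < 0) ↔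
      (α.re < 0 ∧ |a| < |c| ∧ |a| < 2 * |b| ∧ 3 * |a| < 2 * |b| + |c|) := by
  have hcR : (c : ℝ) ≠ 0 := by exact_mod_cast hc
  have hnR : (0 : ℝ) < n := by exact_mod_cast hn
  have hα' : α = (((a : ℝ) / c : ℝ) : ℂ) + ((Real.sqrt n / c : ℝ) : ℂ) * Complex.I := by
    rw [hα]
    push_cast
    ring
  have hre : α.re = (a : ℝ) / c := by rw [hα']; simp
  have him : α.im = Real.sqrt n / c := by rw [hα']; simp
  have him0 : α.im ≠ 0 := by
    rw [him]
    exact div_ne_zero (Real.sqrt_pos.2 hnR).ne' hcR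
  have hbR : (b : ℝ) * c = (a : ℝ) ^ 2 + n := by exact_mod_cast hb
  have hN : α.re ^ 2 + α.im ^ 2 = (b : ℝ) / c := by
    rw [hre, him, div_pow, div_pow, Real.sq_sqrt hnR.le]
    field_simp
    linarith
  rw [quad_neg_aux α him0, hN, hre]
  have hbc : 0 < b * c := by
    rw [hb]
    positivity
  have g1 : (a : ℝ) / c + 1 = ((a + c : ℤ) : ℝ) / c := by
    push_cast; field_simp
  have g2 : 2 * ((b : ℝ) / c) + 3 * (a / c) + 1 = ((2 * b + 3 * a + c : ℤ) : ℝ) / c := by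
    push_cast; field_simp
  have g3 : 2 * ((b : ℝ) / c) + a / c = ((2 * b + a : ℤ) : ℝ) / c := by
    push_cast; field_simp
  rw [g1, g2, g3]
  rcases lt_or_gt_of_ne hc with h | h
  · have hb0 : b < 0 := by nlinarith
    have hcR' : (c : ℝ) < 0 := by exact_mod_cast h
    rw [div_pos_iff_of_neg_right_aux hcR', div_pos_iff_of_neg_right_aux hcR',
      div_pos_iff_of_neg_right_aux hcR', div_neg_iff_of_neg_right_aux hcR']
    simp only [Int.cast_lt_zero, Int.cast_pos]
    rw [abs_of_neg h, abs_of_neg hb0]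
    refine and_congr_right fun ha => ?_
    rw [abs_of_pos ha]
    omega
  · have hb0 : 0 < b := by nlinarith
    have hcR' : (0 : ℝ) < c := by exact_mod_cast h
    rw [div_pos_iff_of_pos_right hcR', div_pos_iff_of_pos_right hcR',
      div_pos_iff_of_pos_right hcR', div_neg_iff_of_pos_right_aux hcR']
    simp only [Int.cast_lt_zero, Int.cast_pos]
    rw [abs_of_pos h, abs_of_pos hb0]
    refine and_congr_right fun ha => ?_
    rw [abs_of_neg ha]
    omega
end

section
/- Let n be an odd square-free positive integer and let (a, B, C) ∈ S_{a>0}(-n), with C = 2C'. If B ≤ n or C' ≤ n, then a ≤ n. -/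
open Complex

theorem stmt9_aux (n a x y : ℤ) (hxy : x * y = 2 * (a ^ 2 + n))
    (h1 : a < x) (h3 : 3 * a < x + y) (h : x ≤ 2 * n) (ha : 0 < a) : a ≤ n := by
  by_contra hc
  push Not at hc
  have e1 : 0 ≤ (x - a - 1) * (2 * a - x - 1) := mul_nonneg (by linarith) (by linarith)
  have e2 : 0 ≤ x * (x + y - 3 * a - 1) := mul_nonneg (by linarith) (by linarith)
  nlinarith

theorem stmt9 (n : ℕ) (hn : 0 < n) (hodd : Odd n) (hsf : Squarefree n)
    (a B C C' : ℕ) (ha : 0 < a) (hB : 0 < B) (hC : 0 < C)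
    (hCC' : C = 2 * C') (hBC : B * C = a ^ 2 + n)
    (h1 : a < 2 * B) (h2 : a < C) (h3 : 3 * a < 2 * B + C)
    (h : B ≤ n ∨ C' ≤ n) :
    a ≤ n := by
  have hz : (B : ℤ) * C = (a : ℤ) ^ 2 + n := by exact_mod_cast hBC
  subst hCC'
  push_cast at hz
  rcases h with h | h
  · have := stmt9_aux n a (2 * B) (2 * C') (by linarith) (by omega) (by omega) (by omega) (by omega)
    omega
  · have := stmt9_aux n a (2 * C') (2 * B) (by linarith) (by omega) (by omega) (by omega) (by omega)
    omega
end

section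
/- Let n be an even square-free positive integer and let (a, B, C) ∈ S_{a>0}(-n), with C = 2C'. If B ≤ n/2 or C' ≤ n/2, then a ≤ n/2. -/
open Complex

theorem stmt10 (n : ℕ) (hn : 0 < n) (heven : Even n) (hsf : Squarefree n)
    (a B C C' : ℕ) (ha : 0 < a) (hB : 0 < B) (hC : 0 < C)
    (hCC' : C = 2 * C') (hBC : B * C = a ^ 2 + n)
    (h1 : a < 2 * B) (h2 : a < C) (h3 : 3 * a < 2 * B + C)
    (h : B ≤ n / 2 ∨ C' ≤ n / 2) :
    a ≤ n / 2 := by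
  obtain ⟨m, hm⟩ := heven
  have hae : Even a := by
    have : Even (a ^ 2) := by
      have h4 : Even (a ^ 2 + n) := by
        rw [← hBC, hCC']
        exact ⟨B * C', by ring⟩
      exact (Nat.even_add.1 h4).2 ⟨m, hm⟩
    exact (Nat.even_pow.1 this).1
  obtain ⟨b, hb⟩ := hae
  obtain ⟨s, hs⟩ : ∃ s, B = b + 1 + s := ⟨B - (b + 1), by omega⟩
  obtain ⟨t, ht⟩ : ∃ t, C' = b + 1 + t := ⟨C' - (b + 1), by omega⟩
  obtain ⟨d, hd⟩ : ∃ d, s + t + 1 = b + d := ⟨s + t + 1 - b, by omega⟩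
  have key : b * (d + 1) + (s + 1) * (t + 1) = m := by
    subst hs ht hCC' hb hm
    zify at hd hBC ⊢
    have hd' : (d : ℤ) = s + t + 1 - b := by linarith
    rw [hd']
    nlinarith [hBC]
  have goal : a ≤ m := by
    rcases Nat.eq_zero_or_pos d with h0 | h0
    · subst h0
      nlinarith [Nat.zero_le (s * t)]
    · nlinarith [Nat.zero_le (s * t), Nat.mul_le_mul_left b h0]
  omega
end

section
/- Let n be an odd square-free positive integer. Then every triple (a, B, C) ∈ S_{a>0}(-n) satisfies a ≤ n. -/
open Complex

theorem stmt11 (n : ℕ) (hn : 0 < n) (hodd : Odd n) (hsf : Squarefree n)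
    (a B C : ℕ) (ha : 0 < a) (hB : 0 < B) (hC : 0 < C) (hCe : 2 ∣ C)
    (hBC : B * C = a ^ 2 + n)
    (h1 : a < 2 * B) (h2 : a < C) (h3 : 3 * a < 2 * B + C) :
    a ≤ n := by 
  obtain ⟨u, hu⟩ : ∃ u, 2 * B = a + 1 + u := ⟨2 * B - (a + 1), by omega⟩
  obtain ⟨v, hv⟩ : ∃ v, C = a + 1 + v := ⟨C - (a + 1), by omega⟩
  obtain ⟨w, hw⟩ : ∃ w, u + v + 1 = a + w := ⟨u + v + 1 - a, by omega⟩
  have key : (a + 1 + u) * (a + 1 + v) = 2 * (a ^ 2 + n) := by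
    rw [← hu, ← hv, ← hBC]; ring
  zify at *
  have hw' : (v : ℤ) = a + w - u - 1 := by linarith
  have h4 : (2 * n : ℤ) = a * (w + 1) + (u * v + a + w) := by
    rw [hw'] at key ⊢
    linarith
  have h5 : (0 : ℤ) ≤ a * w := by positivity
  have h6 : (0 : ℤ) ≤ u * v := by positivity
  have h7 : (0 : ℤ) ≤ w := by positivity
  linarith
end

section
/- Let n be an even square-free positive integer. Then every triple (a, B, C) ∈ S_{a>0}(-n) satisfies a ≤ n/2. -/
open Complex

theorem stmt12 (n : ℕ) (hn : 0 < n) (heven : Even n) (hsf : Squarefree n)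
    (a B C : ℕ) (ha : 0 < a) (hB : 0 < B) (hC : 0 < C) (hCe : 2 ∣ C)
    (hBC : B * C = a ^ 2 + n)
    (h1 : a < 2 * B) (h2 : a < C) (h3 : 3 * a < 2 * B + C) :
    a ≤ n / 2 := by 
  obtain ⟨m, rfl⟩ := heven
  obtain ⟨c, rfl⟩ := hCe
  have hae : Even a := by
    have h : Even (a ^ 2) := by
      rw [Nat.even_iff]
      have : B * (2 * c) = 2 * (B * c) := by ring
      omega
    exact (Nat.even_pow.mp h).1
  obtain ⟨k, rfl⟩ := hae
  obtain ⟨u, rfl⟩ : ∃ u, B = k + 1 + u := Nat.exists_eq_add_of_le (by omega)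
  obtain ⟨v, rfl⟩ : ∃ v, c = k + 1 + v := Nat.exists_eq_add_of_le (by omega)
  have h4 : k ≤ u + v + 1 := by omega
  have h5 : k * k ≤ k * (u + v + 1) := Nat.mul_le_mul_left k h4
  have h6 : k + k ≤ m := by nlinarith [Nat.zero_le (u * v)]
  omega
end

section
/- Let n be an odd square-free positive integer. Then every orbit of the Hecke group H(λ₄) acting on Q*(√-n) contains a unique totally negative quadruplet: there exists α in the orbit such that Q_α = {α, y(α), y²(α), y³(α)} consists entirely of totally negative elements, and if α and α' both lie in the orbit with Q_α and Q_{α'} totally negative quadruplets, then Q_α = Q_{α'} as sets. -/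
open Complex

def TT (n k : ℕ) (z : ℂ) : Prop :=
  ∃ a d b : ℤ, d ≠ 0 ∧ 2 * d * b = a ^ 2 + n ∧
    z = ((a : ℂ) + Real.sqrt n * Complex.I) / ((2 * d : ℤ) : ℂ) ∧
    (2 * a + 2 * d + 2 * b).natAbs = k

lemma sqI (n : ℕ) : ((Real.sqrt n : ℂ) * Complex.I) ^ 2 = -(n : ℂ) := by
  rw [mul_pow, Complex.I_sq, ← Complex.ofReal_pow, Real.sq_sqrt (Nat.cast_nonneg n)]
  simp

lemma TT_mem {n k : ℕ} {z : ℂ} (h : TT n k z) : z ∈ Qstar n := by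
  obtain ⟨a, d, b, hd, hb, hz, -⟩ := h
  exact ⟨a, 2 * d, by omega, ⟨d, rfl⟩, ⟨b, by linarith⟩, hz⟩

lemma mem_TT {n : ℕ} {z : ℂ} (h : z ∈ Qstar n) : ∃ k, TT n k z := by
  obtain ⟨a, c, hc, ⟨d, hd⟩, ⟨b, hb⟩, hz⟩ := h
  subst hd
  exact ⟨_, a, d, b, by rintro rfl; simp at hc, by linarith, hz, rfl⟩

lemma re_form (n : ℕ) (a c : ℤ) :
    (((a : ℂ) + Real.sqrt n * Complex.I) / (c : ℂ)).re = a / c := by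
  rw [← Complex.ofReal_intCast c, Complex.div_ofReal_re]
  simp

lemma im_form (n : ℕ) (a c : ℤ) :
    (((a : ℂ) + Real.sqrt n * Complex.I) / (c : ℂ)).im = Real.sqrt n / c := by
  rw [← Complex.ofReal_intCast c, Complex.div_ofReal_im]
  simp

lemma Q_im {n : ℕ} (hn : 0 < n) {z : ℂ} (h : z ∈ Qstar n) : z.im ≠ 0 := by
  obtain ⟨a, c, hc, -, -, rfl⟩ := h
  rw [im_form]
  have : 0 < Real.sqrt n := Real.sqrt_pos.2 (by exact_mod_cast hn)
  have hc' : (c : ℝ) ≠ 0 := by exact_mod_cast hc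
  exact div_ne_zero this.ne' hc'

lemma Q_re {n : ℕ} (hodd : Odd n) {z : ℂ} (h : z ∈ Qstar n) : z.re ≠ 0 := by
  obtain ⟨a, c, hc, h2, h3, rfl⟩ := h
  rw [re_form]
  have hc' : (c : ℝ) ≠ 0 := by exact_mod_cast hc
  refine div_ne_zero ?_ hc'
  intro h0
  have h0 : a = 0 := by exact_mod_cast h0
  subst h0
  have := h2.trans h3
  obtain ⟨m, hm⟩ := hodd
  omega

lemma lin_ne {z : ℂ} (hz : z.im ≠ 0) (p q : ℝ) (hp : p ≠ 0) : (p : ℂ) * z + q ≠ 0 := by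
  intro h
  have := congrArg Complex.im h
  simp at this
  tauto

lemma ne0 {z : ℂ} (hz : z.im ≠ 0) : z ≠ 0 := by
  rintro rfl; simp at hz

lemma ne1 {z : ℂ} (hz : z.im ≠ 0) : z + 1 ≠ 0 := by
  simpa using lin_ne hz 1 1 one_ne_zero

lemma ne2 {z : ℂ} (hz : z.im ≠ 0) : 2 * z + 1 ≠ 0 := by
  simpa using lin_ne hz 2 1 two_ne_zero

lemma xx {z : ℂ} (hz : z.im ≠ 0) : heckeX (heckeX z) = z := by
  have := ne0 hz
  unfold heckeX
  field_simp

lemma y2 {z : ℂ} (hz : z.im ≠ 0) : heckeY (heckeY z) = -(z + 1) / (2 * z + 1) := by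
  have := ne1 hz
  have h2 := ne2 hz
  unfold heckeY
  have h3 : -1 / (2 * (z + 1)) + 1 = (2 * z + 1) / (2 * (z + 1)) := by
    field_simp; ring
  rw [h3]
  field_simp

lemma y3 {z : ℂ} (hz : z.im ≠ 0) :
    heckeY (heckeY (heckeY z)) = -(2 * z + 1) / (2 * z) := by
  rw [y2 hz]
  have := ne0 hz
  have h2 := ne2 hz
  unfold heckeY
  have h3 : -(z + 1) / (2 * z + 1) + 1 = z / (2 * z + 1) := by
    rw [div_add_one h2]; congr 1; ring
  rw [h3]
  field_simp

lemma y4 {z : ℂ} (hz : z.im ≠ 0) :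
    heckeY (heckeY (heckeY (heckeY z))) = z := by
  rw [y3 hz]
  have := ne0 hz
  unfold heckeY
  have h3 : -(2 * z + 1) / (2 * z) + 1 = -1 / (2 * z) := by
    field_simp; ring
  rw [h3]
  field_simp

lemma quad_y {z : ℂ} (hz : z.im ≠ 0) : quad (heckeY z) = quad z := by
  unfold quad
  rw [y4 hz]
  ext w
  simp only [Set.mem_insert_iff, Set.mem_singleton_iff]
  tauto

lemma TT_y {n k : ℕ} (hn : 0 < n) {z : ℂ} (h : TT n k z) : TT n k (heckeY z) := by
  have him := Q_im hn (TT_mem h)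
  obtain ⟨a, d, b, hd, hb, hz, hk⟩ := h
  have hd' : (d : ℂ) ≠ 0 := by exact_mod_cast hd
  have hpos : (a + 2 * d) ^ 2 + (n : ℤ) > 0 := by positivity
  have hm : 2 * d * (b + 2 * a + 2 * d) = (a + 2 * d) ^ 2 + n := by linarith
  have he : b + 2 * a + 2 * d ≠ 0 := by
    intro h0; rw [h0] at hm; omega
  have he' : ((b : ℂ) + 2 * a + 2 * d) ≠ 0 := by exact_mod_cast he
  refine ⟨-a - 2 * d, b + 2 * a + 2 * d, d, he, by linarith, ?_, ?_⟩
  · have h1 := ne1 him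
    unfold heckeY
    rw [div_eq_iff (by simpa using h1), hz]
    have hm' : 2 * (d : ℂ) * (b + 2 * a + 2 * d) = (a + 2 * d) ^ 2 + n := by exact_mod_cast hm
    push_cast
    obtain ⟨e, hee⟩ : ∃ e : ℂ, e = b + 2 * a + 2 * d := ⟨_, rfl⟩
    rw [← hee] at hm' he' ⊢
    field_simp
    have := sqI n
    linear_combination (-1 : ℂ) * hm' - this
  · omega

lemma TT_x {n k : ℕ} (hn : 0 < n) {z : ℂ} (h : TT n k z) : 
    ∃ j, TT n j (heckeX z) ∧ (0 < z.re → j < k) := by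
  have him := Q_im hn (TT_mem h)
  obtain ⟨a, d, b, hd, hb, hz, hk⟩ := h
  have hd' : (d : ℂ) ≠ 0 := by exact_mod_cast hd
  have hpos : a ^ 2 + (n : ℤ) > 0 := by positivity
  have he : b ≠ 0 := by
    rintro rfl; omega
  have he' : (b : ℂ) ≠ 0 := by exact_mod_cast he
  refine ⟨_, ⟨-a, b, d, he, by linarith, ?_, rfl⟩, ?_⟩
  · have h1 := ne0 him
    unfold heckeX
    rw [div_eq_iff (by simpa using h1), hz]
    push_cast
    field_simp
    have hm' : 2 * (d : ℂ) * b = a ^ 2 + n := by exact_mod_cast hb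
    have := sqI n
    linear_combination (-1 : ℂ) * hm' - this
  · intro hre
    rw [hz, re_form, ← hk] at *
    have hre' : 0 < a * d := by
      have : (0 : ℝ) < a * d := by
        push_cast at hre
        rcases div_pos_iff.1 hre with h | h
        · exact mul_pos h.1 (by linarith)
        · exact mul_pos_of_neg_of_neg h.1 (by linarith)
      exact_mod_cast this
    have hdb : 0 < d * b := by nlinarith
    rcases pos_and_pos_or_neg_and_neg_of_mul_pos hre' with h | h
    · have : 0 < b := by nlinarith
      have : 0 < d + b - a := by nlinarith [sq_nonneg (d - b)]
      omega
    · have : b < 0 := by nlinarith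
      have : d + b - a < 0 := by nlinarith [sq_nonneg (d - b)]
      omega

lemma re_inv_neg {w : ℂ} (hw : 0 < w.re) : (-1 / (2 * w)).re < 0 := by
  have h0 : w ≠ 0 := by rintro rfl; simp at hw
  have : -1 / (2 * w) = -(((1 / 2 : ℝ) : ℂ) * w⁻¹) := by push_cast; field_simp
  rw [this, Complex.neg_re, Complex.re_ofReal_mul, Complex.inv_re]
  have : 0 < Complex.normSq w := Complex.normSq_pos.2 h0
  have : 0 < w.re / Complex.normSq w := by positivity
  linarith

lemma x_pos {z : ℂ} (hz : z.re < 0) : 0 < (heckeX z).re := by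
  have := re_inv_neg (w := -z) (by simpa using hz)
  have h : -1 / (2 * -z) = - heckeX z := by
    have h0 : z ≠ 0 := by rintro rfl; simp at hz
    unfold heckeX; field_simp
  rw [h] at this; simpa using this

lemma y_neg {z : ℂ} (hz : -1 < z.re) : (heckeY z).re < 0 := by
  unfold heckeY
  exact re_inv_neg (by simp; linarith)

lemma ys_neg {z : ℂ} (hi : z.im ≠ 0) (hz : 0 < z.re) : (heckeY z).re < 0 ∧
    (heckeY (heckeY z)).re < 0 ∧ (heckeY (heckeY (heckeY z))).re < 0 := by
  have h0 := ne0 hi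
  have h1 := ne1 hi
  have h2 := ne2 hi
  refine ⟨y_neg (by linarith), ?_, ?_⟩
  · rw [y2 hi]
    have : -(z + 1) / (2 * z + 1) = -1 / (2 * 1) + -1 / (2 * (2 * z + 1)) := by
      obtain ⟨t, ht⟩ : ∃ t, t = 2 * z + 1 := ⟨_, rfl⟩
      have hz' : z = (t - 1) / 2 := by rw [ht]; ring
      rw [← ht] at h2 ⊢
      rw [hz']
      field_simp; ring
    rw [this, Complex.add_re]
    have a1 := re_inv_neg (w := 1) (by simp)
    have a2 := re_inv_neg (w := 2 * z + 1) (by simp; linarith)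
    linarith
  · rw [y3 hi]
    have : -(2 * z + 1) / (2 * z) = -1 + -1 / (2 * z) := by
      field_simp; ring
    rw [this, Complex.add_re]
    have a2 := re_inv_neg (w := z) hz
    simp only [Complex.neg_re, Complex.one_re] at *
    linarith

def RR (n : ℕ) (Q Q' : Set ℂ) : Prop :=
  ∃ z ∈ Qstar n, 0 < z.re ∧ Q = quad z ∧ Q' = quad (heckeX z)

lemma RR_det {n : ℕ} (hn : 0 < n) {A B C : Set ℂ} (h : RR n A B) (h' : RR n A C) : B = C := by
  obtain ⟨z, hz, hzp, rfl, rfl⟩ := h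
  obtain ⟨w, hw, hwp, hq, rfl⟩ := h'
  have hm : w ∈ quad z := by rw [hq]; simp [quad]
  have := ys_neg (Q_im hn hz) hzp
  simp only [quad, Set.mem_insert_iff, Set.mem_singleton_iff] at hm
  rcases hm with rfl | rfl | rfl | rfl
  · rfl
  all_goals linarith

lemma orbit_join {n : ℕ} (hn : 0 < n) (hodd : Odd n) {u v : ℂ} (h : sameOrbit n u v) :
    Relation.Join (Relation.ReflTransGen (RR n)) (quad u) (quad v) := by
  have E : Equivalence (Relation.Join (Relation.ReflTransGen (RR n))) :=
    Relation.equivalence_join_reflTransGen fun a b c hab hac =>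
      ⟨b, Relation.ReflGen.refl, by rw [RR_det hn hab hac]⟩
  unfold sameOrbit at h
  induction h with
  | rel u v h =>
    obtain ⟨hu, hv, rfl | rfl⟩ := h
    · rcases lt_or_gt_of_ne (Q_re hodd hu) with h | h
      · refine ⟨quad u, .refl, .single ⟨heckeX u, hv, x_pos h, rfl, ?_⟩⟩
        rw [xx (Q_im hn hu)]
      · exact ⟨quad (heckeX u), .single ⟨u, hu, h, rfl, rfl⟩, .refl⟩
    · rw [quad_y (Q_im hn hu)]; exact E.refl _
  | refl u => exact E.refl _
  | symm u v _ ih => exact E.symm ih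
  | trans u v w _ _ i1 i2 => exact E.trans i1 i2

lemma term {n : ℕ} {α : ℂ} (h : ∀ z ∈ quad α, z.re < 0) {D : Set ℂ}
    (hD : Relation.ReflTransGen (RR n) (quad α) D) : D = quad α := by
  rcases Relation.ReflTransGen.cases_head hD with h' | ⟨c, ⟨z, hz, hp, hq, -⟩, -⟩
  · exact h'.symm
  · have := h z (by rw [hq]; simp [quad])
    linarith

lemma orb_y {n k : ℕ} (hn : 0 < n) {z : ℂ} (h : TT n k z) : sameOrbit n z (heckeY z) :=
  .rel _ _ ⟨TT_mem h, TT_mem (TT_y hn h), Or.inr rfl⟩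

lemma quad_orb {n k : ℕ} (hn : 0 < n) {z w : ℂ} (h : TT n k z) (hw : w ∈ quad z) :
    TT n k w ∧ sameOrbit n z w := by
  have h1 := TT_y hn h
  have h2 := TT_y hn h1
  have h3 := TT_y hn h2
  have o1 := orb_y hn h
  have o2 := orb_y hn h1
  have o3 := orb_y hn h2
  simp only [quad, Set.mem_insert_iff, Set.mem_singleton_iff] at hw
  rcases hw with rfl | rfl | rfl | rfl
  · exact ⟨h, .refl _⟩
  · exact ⟨h1, o1⟩
  · exact ⟨h2, .trans _ _ _ o1 o2⟩
  · exact ⟨h3, .trans _ _ _ o1 (.trans _ _ _ o2 o3)⟩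

lemma exist_neg {n : ℕ} (hn : 0 < n) (hodd : Odd n) (k : ℕ) : ∀ γ : ℂ, TT n k γ →
    ∃ α ∈ Qstar n, sameOrbit n γ α ∧ ∀ z ∈ quad α, z.re < 0 := by
  induction k using Nat.strong_induction_on with
  | _ k ih =>
    intro γ hγ
    by_cases hq : ∀ z ∈ quad γ, z.re < 0
    · exact ⟨γ, TT_mem hγ, .refl _, hq⟩
    · push Not at hq
      obtain ⟨w, hw, hre⟩ := hq
      obtain ⟨hT, ho⟩ := quad_orb hn hγ hw
      obtain ⟨j, hj, hlt⟩ := TT_x hn hT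
      have hp : 0 < w.re := lt_of_le_of_ne hre (Q_re hodd (TT_mem hT)).symm
      obtain ⟨α, h1, h2, h3⟩ := ih j (hlt hp) _ hj
      exact ⟨α, h1, .trans _ _ _ ho
        (.trans _ _ _ (.rel _ _ ⟨TT_mem hT, TT_mem hj, Or.inl rfl⟩) h2), h3⟩

theorem stmt13 (n : ℕ) (hn : 0 < n) (hodd : Odd n) (hsf : Squarefree n)
    (γ : ℂ) (hγ : γ ∈ Qstar n) :
    (∃ α ∈ Qstar n, sameOrbit n γ α ∧ ∀ z ∈ quad α, z.re < 0) ∧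
    (∀ α ∈ Qstar n, ∀ α' ∈ Qstar n, sameOrbit n γ α → sameOrbit n γ α' →
      (∀ z ∈ quad α, z.re < 0) → (∀ z ∈ quad α', z.re < 0) →
      quad α = quad α') := by
  refine ⟨?_, ?_⟩
  · obtain ⟨k, hk⟩ := mem_TT hγ
    exact exist_neg hn hodd k γ hk
  · intro α _ α' _ h h' hq hq'
    obtain ⟨D, hD, hD'⟩ := orbit_join hn hodd (Relation.EqvGen.trans _ _ _ (.symm _ _ h) h')
    rw [← term hq hD, ← term hq' hD']
end

section
/- For every square-free positive integer n, the action of the Hecke group H(λ₄) on Q*(√-n) is intransitive: there exist elements z, w ∈ Q*(√-n) that do not lie in the same orbit. -/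
open Complex

lemma heckeX_im (z : ℂ) : 0 < (heckeX z).im ↔ 0 < z.im := by
  by_cases hz : z = 0
  · simp [heckeX, hz]
  have h : (heckeX z).im = z.im * (1 / (2 * Complex.normSq z)) := by
    have e : heckeX z = ((-(1 / 2) : ℝ) : ℂ) * z⁻¹ := by
      unfold heckeX
      push_cast
      field_simp
    rw [e, Complex.im_ofReal_mul, Complex.inv_im]
    have := (Complex.normSq_pos.2 hz).ne'
    field_simp
  have hp := Complex.normSq_pos.2 hz
  rw [h]
  exact mul_pos_iff_of_pos_right (by positivity)

lemma heckeY_im (z : ℂ) : 0 < (heckeY z).im ↔ 0 < z.im := by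
  have := heckeX_im (z + 1)
  simpa [heckeX, heckeY] using this

lemma sameOrbit_im (n : ℕ) (z w : ℂ) (h : sameOrbit n z w) : 0 < w.im ↔ 0 < z.im := by
  unfold sameOrbit at h
  induction h with
  | rel a b hab =>
    rcases hab.2.2 with h | h
    · rw [h]; exact heckeX_im a
    · rw [h]; exact heckeY_im a
  | refl => exact Iff.rfl
  | symm _ _ _ ih => exact ih.symm
  | trans _ _ _ _ _ h1 h2 => exact h2.trans h1

theorem stmt18 (n : ℕ) (hn : 0 < n) (hsf : Squarefree n) :
    ∃ z ∈ Qstar n, ∃ w ∈ Qstar n, ¬ sameOrbit n z w := by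
  have hd : (2 : ℤ) ∣ (n : ℤ) ^ 2 + (n : ℤ) := by
    have := (Int.even_mul_succ_self (n : ℤ)).two_dvd
    rwa [show (n : ℤ) ^ 2 + n = n * (n + 1) by ring]
  have hs : 0 < Real.sqrt n := Real.sqrt_pos.2 (by exact_mod_cast hn)
  refine ⟨_, ⟨n, 2, by norm_num, by norm_num, hd, rfl⟩,
    _, ⟨n, -2, by norm_num, by norm_num, (neg_dvd).2 hd, rfl⟩, fun h => ?_⟩
  have h2 := (sameOrbit_im n _ _ h).2 ?_
  · have e : (((n : ℤ) : ℂ) + Real.sqrt n * Complex.I) / ((-2 : ℤ) : ℂ)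
        = ((-(1 / 2) : ℝ) : ℂ) * (((n : ℝ) : ℂ) + Real.sqrt n * Complex.I) := by
      push_cast; ring
    rw [e, Complex.im_ofReal_mul] at h2
    simp at h2
    linarith
  · have e : (((n : ℤ) : ℂ) + Real.sqrt n * Complex.I) / ((2 : ℤ) : ℂ)
        = (((1 / 2) : ℝ) : ℂ) * (((n : ℝ) : ℂ) + Real.sqrt n * Complex.I) := by
      push_cast; ring
    rw [e, Complex.im_ofReal_mul]
    simpa using hn
end

section
/- Let i and n be positive integers and let C be a positive even integer dividing i² + n. Then at most one of the following three conditions holds: (i) 2(i²+n)/C ≤ i; (ii) C ≤ i; (iii) 2(i²+n)/C + C ≤ 3i. -/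
open Complex

theorem stmt19 (i n C : ℕ) (hi : 0 < i) (hn : 0 < n) (hC : 0 < C)
    (hCe : 2 ∣ C) (hdvd : C ∣ i ^ 2 + n) :
    ¬(2 * (i ^ 2 + n) / C ≤ i ∧ C ≤ i) ∧
    ¬(2 * (i ^ 2 + n) / C ≤ i ∧ 2 * (i ^ 2 + n) / C + C ≤ 3 * i) ∧
    ¬(C ≤ i ∧ 2 * (i ^ 2 + n) / C + C ≤ 3 * i) := by
  obtain ⟨k, hk⟩ := hdvd
  have hB : 2 * (i ^ 2 + n) / C = 2 * k := by
    rw [hk, show 2 * (C * k) = C * (2 * k) by ring, Nat.mul_div_cancel_left _ hC]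
  rw [hB]
  have hp : (2 * k) * C = 2 * i ^ 2 + 2 * n := by
    rw [← mul_add, hk]; ring
  generalize 2 * k = B at *
  clear hB hk hCe
  zify at *
  refine ⟨?_, ?_, ?_⟩
  · rintro ⟨h1, h2⟩
    nlinarith [mul_le_mul h1 h2 hC.le hi.le, sq_nonneg (i : ℤ)]
  · rintro ⟨h1, h2⟩
    have hB0 : (0 : ℤ) ≤ B := Int.natCast_nonneg B
    nlinarith [mul_le_mul_of_nonneg_left h2 hB0,
      mul_nonneg (sub_nonneg.2 h1) (by linarith : (0 : ℤ) ≤ 2 * i - B)]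
  · rintro ⟨h1, h2⟩
    nlinarith [mul_le_mul_of_nonneg_left h2 hC.le,
      mul_nonneg (sub_nonneg.2 h1) (by linarith : (0 : ℤ) ≤ 2 * i - C)]
end
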